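/- Let k ≥ 1 and δ ≥ 2 be integers and let n ≥ (δ² + kδ + 7δ + 6k + 9)(δ² + kδ + 1). For every graph G in the family 𝓑₂(n,k,δ), the Q-index satisfies q(G) < 2(n − δ − k − 1). -/

import Mathlib

open Finset Matrix

/-- The signless Laplacian matrix `Q(G) = D(G) + A(G)` of a graph. -/
noncomputable def signlessLaplacian {V : Type*} [Fintype V] [DecidableEq V]
    (G : SimpleGraph V) [DecidableRel G.Adj] : Matrix V V ℝ :=
  Matrix.diagonal (fun v => (G.degree v : ℝ)) + G.adjMatrix ℝ

/-- The Q-index (largest eigenvalue of the signless Laplacian). -/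
noncomputable def qIndex {V : Type*} [Fintype V] [DecidableEq V]
    (G : SimpleGraph V) [DecidableRel G.Adj] : ℝ :=
  sSup {μ : ℝ | ∃ x : V → ℝ, x ≠ 0 ∧ signlessLaplacian G *ᵥ x = μ • x}

/-- The adjacency spectral radius (largest eigenvalue of the adjacency matrix). -/
noncomputable def adjSpecRad {V : Type*} [Fintype V] [DecidableEq V]
    (G : SimpleGraph V) [DecidableRel G.Adj] : ℝ :=
  sSup {μ : ℝ | ∃ x : V → ℝ, x ≠ 0 ∧ G.adjMatrix ℝ *ᵥ x = μ • x}

/-- A graph is `k`-path-coverable if its vertex set can be covered by at most `k`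
vertex-disjoint paths. -/
def PathCoverable {V : Type*} (G : SimpleGraph V) (k : ℕ) : Prop :=
  ∃ (m : ℕ) (P : Fin m → Σ (u : V) (v : V), G.Walk u v),
    m ≤ k ∧
    (∀ i, (P i).2.2.IsPath) ∧
    (∀ v : V, ∃ i, v ∈ (P i).2.2.support) ∧
    (∀ i j, i ≠ j → ∀ v, v ∈ (P i).2.2.support → v ∉ (P j).2.2.support)

/-- A graph is traceable if it has a Hamilton path. -/
def Traceable {V : Type*} (G : SimpleGraph V) : Prop :=
  ∃ (u v : V) (p : G.Walk u v), p.IsPath ∧ ∀ w, w ∈ p.support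

/-- `B(n,k,δ) = K_δ ∨ (K_{n-2δ-k} ∪ complement K_{δ+k})`: the first `δ` vertices form the
dominating clique `Y`, the next `n-2δ-k` vertices form the clique `Z`, and the
last `δ+k` vertices form the independent set `X`. -/
def Bgraph (n k δ : ℕ) : SimpleGraph (Fin n) where
  Adj i j := i ≠ j ∧ ((i : ℕ) < δ ∨ (j : ℕ) < δ ∨
      ((i : ℕ) < n - (δ + k) ∧ (j : ℕ) < n - (δ + k)))
  symm := by
    refine ⟨?_⟩
    rintro i j ⟨hne, h⟩
    exact ⟨hne.symm, by tauto⟩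
  loopless := by
    refine ⟨?_⟩
    rintro i ⟨h, -⟩
    exact h rfl

instance (n k δ : ℕ) : DecidableRel (Bgraph n k δ).Adj := fun i j =>
  inferInstanceAs (Decidable (i ≠ j ∧ ((i : ℕ) < δ ∨ (j : ℕ) < δ ∨
      ((i : ℕ) < n - (δ + k) ∧ (j : ℕ) < n - (δ + k)))))

instance {n : ℕ} (G : SimpleGraph (Fin n)) [DecidableRel G.Adj]
    (E' : Finset (Sym2 (Fin n))) : DecidableRel (G.deleteEdges ↑E').Adj := fun a b =>
  decidable_of_iff (G.Adj a b ∧ s(a, b) ∉ E') (by simp)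

/-- The edge set `E₁` of `B(n,k,δ)`: edges with both endpoints in `Y ∪ Z`. -/
def IsE1Edge (n k δ : ℕ) (e : Sym2 (Fin n)) : Prop :=
  e ∈ (Bgraph n k δ).edgeSet ∧ ∀ v ∈ e, (v : ℕ) < n - (δ + k)

/-- The family `𝓑₁(n,k,δ)`, up to isomorphism. -/
def InB1 (n k δ : ℕ) (G : SimpleGraph (Fin n)) : Prop :=
  ∃ E' : Finset (Sym2 (Fin n)),
    (∀ e ∈ E', IsE1Edge n k δ e) ∧ E'.card ≤ δ * (δ + k) / 4 ∧
    Nonempty (G ≃g (Bgraph n k δ).deleteEdges ↑E')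

/-- The family `𝓑₂(n,k,δ)`, up to isomorphism. -/
def InB2 (n k δ : ℕ) (G : SimpleGraph (Fin n)) : Prop :=
  ∃ E' : Finset (Sym2 (Fin n)),
    (∀ e ∈ E', IsE1Edge n k δ e) ∧ E'.card = δ * (δ + k) / 4 + 1 ∧
    Nonempty (G ≃g (Bgraph n k δ).deleteEdges ↑E')

lemma dsum_expand {n : ℕ} (f g y : Fin n → ℝ) :
    ∑ u, ∑ v, f u * g v * (y u + y v) ^ 2 =
      (∑ u, f u * y u ^ 2) * (∑ v, g v) + 2 * (∑ u, f u * y u) * (∑ v, g v * y v)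
        + (∑ u, f u) * (∑ v, g v * y v ^ 2) := by
  rw [mul_assoc 2, Finset.sum_mul_sum, Finset.sum_mul_sum, Finset.sum_mul_sum, Finset.mul_sum,
    ← Finset.sum_add_distrib, ← Finset.sum_add_distrib]
  refine Finset.sum_congr rfl fun u _ => ?_
  rw [Finset.mul_sum, ← Finset.sum_add_distrib, ← Finset.sum_add_distrib]
  refine Finset.sum_congr rfl fun v _ => ?_
  ring

/-- The quadratic form of the signless Laplacian as an ordered double sum. -/
lemma quad_form {n : ℕ} (G : SimpleGraph (Fin n)) [DecidableRel G.Adj] (x : Fin n → ℝ) :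
    ∑ u, ∑ v, (if G.Adj u v then (x u + x v) ^ 2 else 0) =
      2 * ∑ u, x u * (signlessLaplacian G *ᵥ x) u := by
  have hdeg : ∀ u, (G.degree u : ℝ) = ∑ v, (if G.Adj u v then (1 : ℝ) else 0) := by
    intro u
    rw [← SimpleGraph.card_neighborFinset_eq_degree, SimpleGraph.neighborFinset_eq_filter]
    simp
  have h1 : ∑ u, ∑ v, (if G.Adj u v then (x u + x v) ^ 2 else 0) =
      ∑ u, ∑ v, (if G.Adj u v then (1 : ℝ) else 0) * x u ^ 2 +
      ∑ u, ∑ v, (if G.Adj u v then (1 : ℝ) else 0) * x v ^ 2 +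
      2 * ∑ u, ∑ v, (if G.Adj u v then (1 : ℝ) else 0) * (x u * x v) := by
    rw [Finset.mul_sum, ← Finset.sum_add_distrib, ← Finset.sum_add_distrib]
    refine Finset.sum_congr rfl fun u _ => ?_
    rw [Finset.mul_sum, ← Finset.sum_add_distrib, ← Finset.sum_add_distrib]
    refine Finset.sum_congr rfl fun v _ => ?_
    split_ifs <;> ring
  have h2 : ∑ u, ∑ v, (if G.Adj u v then (1 : ℝ) else 0) * x v ^ 2 =
      ∑ u, ∑ v, (if G.Adj u v then (1 : ℝ) else 0) * x u ^ 2 := by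
    rw [Finset.sum_comm]
    simp only [G.adj_comm]
  rw [h1, h2, ← two_mul, ← mul_add, ← Finset.sum_add_distrib]
  congr 1
  refine Finset.sum_congr rfl fun u _ => ?_
  rw [signlessLaplacian, Matrix.add_mulVec, Pi.add_apply, Matrix.mulVec_diagonal, hdeg u,
    Matrix.mulVec, dotProduct, mul_add, Finset.mul_sum, Finset.sum_mul, Finset.mul_sum]
  congr 1
  · refine Finset.sum_congr rfl fun v _ => ?_
    ring
  · refine Finset.sum_congr rfl fun v _ => ?_
    rw [SimpleGraph.adjMatrix_apply]
    ring

/-- A strict bound on the quadratic form gives a strict bound on the Q-index. -/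
lemma qIndex_lt_of_quad {n : ℕ} (G : SimpleGraph (Fin n)) [DecidableRel G.Adj] (c : ℝ)
    (hc : 0 < c)
    (h : ∀ x : Fin n → ℝ, x ≠ 0 →
      ∑ u, ∑ v, (if G.Adj u v then (x u + x v) ^ 2 else 0) < 2 * c * ∑ u, x u ^ 2) :
    qIndex G < c := by
  unfold qIndex
  set s := {μ : ℝ | ∃ x : Fin n → ℝ, x ≠ 0 ∧ signlessLaplacian G *ᵥ x = μ • x} with hs
  have hfin : s.Finite := by
    refine (Module.End.finite_hasEigenvalue (Matrix.toLin' (signlessLaplacian G))).subset ?_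
    rintro μ ⟨x, hx, hxe⟩
    exact Module.End.hasEigenvalue_of_hasEigenvector (x := x)
      ⟨Module.End.mem_eigenspace_iff.2 (by rw [Matrix.toLin'_apply]; exact hxe), hx⟩
  rcases s.eq_empty_or_nonempty with he | hne
  · rw [he, Real.sSup_empty]; exact hc
  · obtain ⟨x, hx, hxe⟩ := hne.csSup_mem hfin
    have h1 := h x hx
    rw [quad_form, hxe] at h1
    have h2 : ∑ u, x u * (sSup s • x) u = sSup s * ∑ u, x u ^ 2 := by
      rw [Finset.mul_sum]
      refine Finset.sum_congr rfl fun u _ => ?_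
      simp only [Pi.smul_apply, smul_eq_mul]; ring
    rw [h2] at h1
    have h3 : 0 ≤ ∑ u, x u ^ 2 := Finset.sum_nonneg fun u _ => sq_nonneg _
    nlinarith

/-- Numerical bookkeeping of the size condition. -/
lemma num_bound (k δ n K p e m D : ℝ) (hk : 1 ≤ k) (hδ : 2 ≤ δ)
    (hn : (δ ^ 2 + k * δ + 7 * δ + 6 * k + 9) * (δ ^ 2 + k * δ + 1) ≤ n)
    (hm : m = δ + k) (hD : D = δ * m)
    (hK : K = 2 * (n - m - 1) - δ - 1) (hp : p = m + m * δ / K)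
    (he1 : D + 1 ≤ 4 * e) (he2 : 4 * e ≤ D + 4) :
    0 < K ∧ 0 < p ∧ 3 / 4 ≤ 4 * e - p * δ ∧ 0 < n - m - p ∧
      32 * e ^ 2 + 4 * p ^ 2 * δ < 4 * (n - m - p) * (4 * e - p * δ) := by
  have hDk : D = δ ^ 2 + k * δ := by rw [hD, hm]; ring
  have hDm : 2 * m ≤ D := by rw [hD]; nlinarith
  have hm3 : 3 ≤ m := by linarith
  have hn' : (D + m + 5 * m + δ + 9) * (D + 1) ≤ n := by rw [hDk, hm]; linarith
  have hDδ : 3 * δ ≤ D := by rw [hD]; nlinarith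
  have hKb : 4 * (D * δ) + 2 * n - 2 * ((D + m + 5 * m + δ + 9) * (D + 1)) ≤ K := by
    rw [hK]; nlinarith
  have hKb' : 4 * (D * δ) ≤ K := by linarith
  have hDp : 0 < D * δ := by nlinarith
  have hK0 : 0 < K := by linarith
  set t := m * δ / K with ht
  have ht0 : 0 < t := by apply div_pos _ hK0; nlinarith
  have htK : t * K = m * δ := by rw [ht]; field_simp
  have htδ : t * δ ≤ 1 / 4 := by
    have : t * δ = m * δ * δ / K := by rw [ht]; ring
    rw [this, div_le_iff₀ hK0]
    nlinarith
  have ht8 : t ≤ 1 / 8 := by nlinarith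
  have hpδ : p * δ ≤ D + 1 / 4 := by rw [hp, hD]; linarith
  have hp8 : p ≤ m + 1 / 8 := by linarith
  have hp0 : 0 < p := by linarith
  have hB : 3 / 4 ≤ 4 * e - p * δ := by linarith
  have hA : (D + 6 * m + δ + 9) * (D + 1) - 2 * m - 1 ≤ n - m - p := by linarith
  have hA0 : 0 < n - m - p := by
    have q1 : 0 ≤ m * D := mul_nonneg (by linarith) (by linarith)
    have q2 : 0 ≤ δ * D := mul_nonneg (by linarith) (by linarith)
    have q3 : 0 ≤ D * D := mul_nonneg (by linarith) (by linarith)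
    linarith
  refine ⟨hK0, hp0, hB, hA0, ?_⟩
  have h1 : 32 * e ^ 2 ≤ 2 * (D + 4) ^ 2 := by nlinarith
  have h2 : p ^ 2 * δ ≤ (m + 1 / 8) * (D + 1 / 4) := by
    have : p ^ 2 * δ = p * (p * δ) := by ring
    rw [this]
    exact mul_le_mul hp8 hpδ (by nlinarith) (by linarith)
  have h3 : 3 * (n - m - p) ≤ 4 * (n - m - p) * (4 * e - p * δ) := by
    have := mul_le_mul_of_nonneg_left hB hA0.le
    linarith
  have q1 : 0 ≤ m * D := mul_nonneg (by linarith) (by linarith)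
  have q2 : 0 ≤ δ * D := mul_nonneg (by linarith) (by linarith)
  have q3 : 0 ≤ D * D := mul_nonneg (by linarith) (by linarith)
  have h4 : 2 * (D + 4) ^ 2 + 4 * ((m + 1 / 8) * (D + 1 / 4)) <
      3 * ((D + 6 * m + δ + 9) * (D + 1) - 2 * m - 1) := by linarith
  linarith

/-- The scalar core of the argument. -/
lemma scalar_core (N m δ e a d2 L Ld Yd Yd2 R U S T J P SW K p : ℝ)
    (hm : 0 < m) (hN : 0 < N) (hK : 0 < K) (hKe : K = 2 * (N - 1) - δ - 1)
    (hp : p = m + m * δ / K) (hp0 : 0 < p) (hB : 3 / 4 ≤ 4 * e - p * δ)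
    (hA : 0 < N - p)
    (hC : 32 * e ^ 2 + 4 * p ^ 2 * δ < 4 * (N - p) * (4 * e - p * δ))
    (hd2 : 0 ≤ d2) (hP : P = d2 + N * a ^ 2) (hSW : SW = N * a)
    (hJ : 4 * e * a ^ 2 + 4 * a * Ld ≤ J)
    (hT : T = δ * a ^ 2 + 2 * a * Yd + Yd2) (hYd2 : Yd2 ≤ d2)
    (hS : S ^ 2 ≤ δ * T) (hU : U ^ 2 ≤ m * R) (hR : 0 ≤ R) (hPR : 0 < P + R)
    (hL : L = 4 * Ld - 2 * p * Yd) (hL2 : L ^ 2 ≤ (32 * e ^ 2 + 4 * p ^ 2 * δ) * d2) :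
    (N * P + SW ^ 2 - 2 * P) + (m * T + 2 * S * U + δ * R) - J < 2 * (N - 1) * (P + R) := by
  -- the mixed term
  have h1 : 2 * S * U ≤ K * R + m * δ / K * T := by
    have e1 : 2 * S * U ≤ K / m * U ^ 2 + m / K * S ^ 2 := by
      have : K / m * U ^ 2 + m / K * S ^ 2 - 2 * S * U = (K * U - m * S) ^ 2 / (m * K) := by
        field_simp; ring
      have h0 : 0 ≤ (K * U - m * S) ^ 2 / (m * K) := by positivity
      linarith
    have e2 : K / m * U ^ 2 ≤ K * R := by
      calc K / m * U ^ 2 ≤ K / m * (m * R) := by gcongr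
        _ = K * R := by field_simp
    have e3 : m / K * S ^ 2 ≤ m * δ / K * T := by
      calc m / K * S ^ 2 ≤ m / K * (δ * T) := by gcongr
        _ = m * δ / K * T := by ring
    linarith
  have h2 : m * T + m * δ / K * T = p * T := by rw [hp]; ring
  have h3 : p * T ≤ p * (δ * a ^ 2 + 2 * a * Yd + d2) := by
    rw [hT]; gcongr
  set A := N - p
  set B := 4 * e - p * δ
  set C := 32 * e ^ 2 + 4 * p ^ 2 * δ
  have hB0 : 0 < B := by linarith
  have key : 0 < A * d2 + B * a ^ 2 + a * L + R := by
    rcases hd2.eq_or_lt with h0 | h0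
    · have hL0 : L = 0 := by rw [← h0] at hL2; nlinarith
      rw [← h0, hL0]
      rcases eq_or_ne a 0 with ha | ha
      · rw [ha]; rw [hP, ← h0, ha] at hPR; linarith
      · have : 0 < B * a ^ 2 := by positivity
        linarith
    · have : 0 < 4 * B * (A * d2 + B * a ^ 2 + a * L) := by
        nlinarith [sq_nonneg (2 * B * a + L), mul_pos (sub_pos.2 hC) h0]
      have : 0 < A * d2 + B * a ^ 2 + a * L := by
        by_contra hcon
        nlinarith
      linarith
  have h4 : A * d2 + B * a ^ 2 + a * L =
      N * d2 + (4 * e * a ^ 2 + 4 * a * Ld) - p * (δ * a ^ 2 + 2 * a * Yd + d2) := by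
    simp only [A, B, hL]; ring
  have h5 : 2 * (N - 1) * R = K * R + δ * R + R := by rw [hKe]; ring
  have h6 : 2 * (N - 1) * P - (N * P + SW ^ 2 - 2 * P) = N * d2 := by rw [hSW, hP]; ring
  linarith

lemma card_lt_real (n c : ℕ) (h : c ≤ n) :
    ∑ v : Fin n, (if (v : ℕ) < c then (1 : ℝ) else 0) = c := by
  rw [Fin.sum_univ_eq_sum_range (fun i => if i < c then (1 : ℝ) else 0) n, Finset.sum_boole]
  congr 1
  have : (Finset.range n).filter (fun i => i < c) = Finset.range c := by
    ext i; simp only [Finset.mem_filter, Finset.mem_range]; omega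
  rw [this, Finset.card_range]

set_option maxHeartbeats 2000000 in
lemma main_quad (k δ n : ℕ) (hk : 1 ≤ k) (hδ : 2 ≤ δ)
    (hn : (δ ^ 2 + k * δ + 7 * δ + 6 * k + 9) * (δ ^ 2 + k * δ + 1) ≤ n)
    (E' : Finset (Sym2 (Fin n))) (hE : ∀ e ∈ E', IsE1Edge n k δ e)
    (hcard : E'.card = δ * (δ + k) / 4 + 1) (y : Fin n → ℝ) (hy : y ≠ 0) :
    ∑ u, ∑ v, (if ((Bgraph n k δ).deleteEdges ↑E').Adj u v then (y u + y v) ^ 2 else 0) <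
      2 * (2 * ((n : ℝ) - δ - k - 1)) * ∑ u, y u ^ 2 := by
  classical
  have hnbig : 2 * δ + k + 1 ≤ n := by
    have h1 := Nat.le_mul_of_pos_right (δ ^ 2 + k * δ + 7 * δ + 6 * k + 9)
      (Nat.succ_pos (δ ^ 2 + k * δ))
    simp only [Nat.succ_eq_add_one] at h1
    linarith [Nat.zero_le (δ ^ 2), Nat.zero_le (k * δ)]
  -- indicators
  set N : ℕ := n - (δ + k) with hNdef
  let w : Fin n → ℝ := fun v => if (v : ℕ) < N then 1 else 0
  let z : Fin n → ℝ := fun v => if (v : ℕ) < δ then 1 else 0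
  have hNr : (N : ℝ) = n - (δ + k) := by
    rw [hNdef, Nat.cast_sub (by omega)]; push_cast; ring
  have hw : ∑ v, w v = N := card_lt_real n N (by omega)
  have hz : ∑ v, z v = δ := card_lt_real n δ (by omega)
  have hww : ∀ v, w v * w v = w v := fun v => by simp only [w]; split_ifs <;> simp
  have hzz : ∀ v, z v * z v = z v := fun v => by simp only [z]; split_ifs <;> simp
  have hzw : ∀ v, z v * w v = z v := fun v => by
    simp only [z, w]; split_ifs <;> first | omega | simp
  have hz0 : ∀ v, 0 ≤ z v := fun v => by simp only [z]; split_ifs <;> simp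
  have hz1 : ∀ v, z v ≤ 1 := fun v => by simp only [z]; split_ifs <;> simp
  have hw1 : ∀ v, 0 ≤ 1 - w v := fun v => by simp only [w]; split_ifs <;> simp
  have hx : ∑ v, (1 - w v) = (δ : ℝ) + k := by
    rw [Finset.sum_sub_distrib, hw, hNr]; simp
  -- the removed graph
  have hmem : ∀ u v, s(u, v) ∈ E' → u ≠ v ∧ (u : ℕ) < N ∧ (v : ℕ) < N := by
    intro u v h
    obtain ⟨h1, h2⟩ := hE _ h
    exact ⟨((Bgraph n k δ).mem_edgeSet.1 h1).ne, h2 u (by simp), h2 v (by simp)⟩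
  obtain ⟨F, hFadj⟩ : ∃ F : SimpleGraph (Fin n), ∀ u v, F.Adj u v ↔ s(u, v) ∈ E' := by
    refine ⟨SimpleGraph.fromEdgeSet (E' : Set (Sym2 (Fin n))), fun u v => ?_⟩
    rw [SimpleGraph.fromEdgeSet_adj, Finset.mem_coe]
    exact ⟨fun h => h.1, fun h => ⟨h, (hmem u v h).1⟩⟩
  let r : Fin n → Fin n → ℝ := fun u v => if F.Adj u v then 1 else 0
  let g : Fin n → ℝ := fun u => (F.degree u : ℝ)
  have hFE : F.edgeFinset = E' := by
    ext e
    induction e with | _ u v => rw [SimpleGraph.mem_edgeFinset, SimpleGraph.mem_edgeSet, hFadj]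
  have hgr : ∀ u, g u = ∑ v, r u v := by
    intro u
    simp only [g, r]
    rw [← SimpleGraph.card_neighborFinset_eq_degree, SimpleGraph.neighborFinset_eq_filter]
    simp
  have hrsymm : ∀ u v, r u v = r v u := fun u v => by simp only [r, F.adj_comm]
  set e : ℝ := (E'.card : ℝ) with he
  have hgsum : ∑ u, g u = 2 * e := by
    have := F.sum_degrees_eq_twice_card_edges
    rw [hFE] at this
    simp only [g, he]
    exact_mod_cast this
  have hg0 : ∀ u, 0 ≤ g u := fun u => Nat.cast_nonneg _
  have hge : ∀ u, g u ≤ e := by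
    intro u
    simp only [g, he]
    rw [← hFE, ← SimpleGraph.card_incidenceFinset_eq_degree]
    exact_mod_cast Finset.card_le_card (F.incidenceFinset_subset u)
  have hg2 : ∑ u, g u ^ 2 ≤ 2 * e ^ 2 := by
    calc ∑ u, g u ^ 2 ≤ ∑ u, e * g u := Finset.sum_le_sum fun u _ => by nlinarith [hg0 u, hge u]
      _ = 2 * e ^ 2 := by rw [← Finset.mul_sum, hgsum]; ring
  -- decomposition
  have hdecomp : ∑ u, ∑ v,
      (if ((Bgraph n k δ).deleteEdges ↑E').Adj u v then (y u + y v) ^ 2 else 0) =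
      ∑ u, ∑ v, w u * w v * (y u + y v) ^ 2 - 4 * ∑ u, w u * y u ^ 2
      + ∑ u, ∑ v, z u * (1 - w v) * (y u + y v) ^ 2
      + ∑ u, ∑ v, (1 - w u) * z v * (y u + y v) ^ 2
      - ∑ u, ∑ v, r u v * (y u + y v) ^ 2 := by
    have hdiag : 4 * ∑ u, w u * y u ^ 2 =
        ∑ u, ∑ v, (if u = v then w u * (y u + y v) ^ 2 else 0) := by
      rw [Finset.mul_sum]
      refine Finset.sum_congr rfl fun u _ => ?_
      rw [Finset.sum_ite_eq]
      simp only [Finset.mem_univ, if_true]; ring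
    rw [hdiag, ← Finset.sum_sub_distrib, ← Finset.sum_add_distrib, ← Finset.sum_add_distrib,
      ← Finset.sum_sub_distrib]
    refine Finset.sum_congr rfl fun u _ => ?_
    rw [← Finset.sum_sub_distrib, ← Finset.sum_add_distrib, ← Finset.sum_add_distrib,
      ← Finset.sum_sub_distrib]
    refine Finset.sum_congr rfl fun v _ => ?_
    have hadj : ((Bgraph n k δ).deleteEdges ↑E').Adj u v ↔
        (u ≠ v ∧ ((u : ℕ) < δ ∨ (v : ℕ) < δ ∨ ((u : ℕ) < N ∧ (v : ℕ) < N))) ∧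
          s(u, v) ∉ E' := by
      rw [SimpleGraph.deleteEdges_adj, Finset.mem_coe]; rfl
    have hδN : δ < N := by omega
    simp only [hadj, r, hFadj, w, z]
    by_cases hin : s(u, v) ∈ E'
    · obtain ⟨h1, h2, h3⟩ := hmem u v hin
      simp [hin, h1, h2, h3]
    · by_cases huv : u = v
      · subst huv
        by_cases h1 : (u : ℕ) < N
        · simp [hin, h1]
        · have : ¬ (u : ℕ) < δ := by omega
          simp [hin, h1, this]
      · by_cases h1 : (u : ℕ) < N <;> by_cases h2 : (v : ℕ) < N <;>
        by_cases h3 : (u : ℕ) < δ <;> by_cases h4 : (v : ℕ) < δ <;>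
        first
          | omega
          | simp [hin, huv, h1, h2, h3, h4]
  rw [hdecomp, dsum_expand, dsum_expand, dsum_expand, hw, hz, hx]
  -- scalars
  set P := ∑ u, w u * y u ^ 2 with hPd
  set SW := ∑ u, w u * y u with hSWd
  set T := ∑ u, z u * y u ^ 2 with hTd
  set S := ∑ u, z u * y u with hSd
  set R := ∑ u, (1 - w u) * y u ^ 2 with hRd
  set U := ∑ u, (1 - w u) * y u with hUd
  set J2 := ∑ u, ∑ v, r u v * (y u + y v) ^ 2 with hJd
  have hN0 : (0 : ℝ) < N := by exact_mod_cast (by omega : 0 < N)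
  let a : ℝ := SW / N
  let d : Fin n → ℝ := fun v => w v * (y v - a)
  have hSWa : SW = N * a := by simp only [a]; field_simp
  have hPR : ∑ u, y u ^ 2 = P + R := by
    rw [hPd, hRd, ← Finset.sum_add_distrib]
    exact Finset.sum_congr rfl fun u _ => by ring
  have hpos : 0 < P + R := by
    rw [← hPR]
    obtain ⟨i, hi⟩ := Function.ne_iff.1 hy
    refine Finset.sum_pos' (fun _ _ => sq_nonneg _) ⟨i, Finset.mem_univ _, ?_⟩
    have : y i ≠ 0 := hi
    positivity
  have hd2 : P = ∑ u, d u ^ 2 + N * a ^ 2 := by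
    have : ∑ u, d u ^ 2 = P - 2 * a * SW + a ^ 2 * ∑ u, w u := by
      rw [hPd, hSWd, Finset.mul_sum, Finset.mul_sum, ← Finset.sum_sub_distrib,
        ← Finset.sum_add_distrib]
      refine Finset.sum_congr rfl fun u _ => ?_
      have := hww u
      simp only [d]
      linear_combination (y u - a) ^ 2 * this
    rw [this, hw, hSWa]; ring
  have hTe : T = δ * a ^ 2 + 2 * a * ∑ u, z u * d u + ∑ u, z u * d u ^ 2 := by
    rw [← hz, Finset.sum_mul, Finset.mul_sum, ← Finset.sum_add_distrib,
      ← Finset.sum_add_distrib, hTd]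
    refine Finset.sum_congr rfl fun u _ => ?_
    have h1 := hzw u
    have h2 : z u * d u = z u * (y u - a) := by
      simp only [d]; linear_combination (y u - a) * h1
    linear_combination (-2 * a - d u - (y u - a)) * h2
  have hYd2 : ∑ u, z u * d u ^ 2 ≤ ∑ u, d u ^ 2 :=
    Finset.sum_le_sum fun u _ => by nlinarith [hz1 u, sq_nonneg (d u)]
  have hS2 : S ^ 2 ≤ δ * T := by
    have := Finset.sum_mul_sq_le_sq_mul_sq Finset.univ z (fun u => z u * y u)
    have e1 : ∑ u, z u * (z u * y u) = S :=
      Finset.sum_congr rfl fun u _ => by rw [← mul_assoc, hzz]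
    have e2 : ∑ u, z u ^ 2 = δ := by
      rw [← hz]; exact Finset.sum_congr rfl fun u _ => by rw [sq, hzz]
    have e3 : ∑ u, (z u * y u) ^ 2 = T :=
      Finset.sum_congr rfl fun u _ => by rw [mul_pow, sq (z u), hzz]
    rw [e1, e2, e3] at this
    exact this
  have hU2 : U ^ 2 ≤ (δ + k) * R := by
    have hvv : ∀ u, (1 - w u) * (1 - w u) = 1 - w u := fun u => by
      linear_combination hww u
    have := Finset.sum_mul_sq_le_sq_mul_sq Finset.univ (fun u => 1 - w u)
      (fun u => (1 - w u) * y u)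
    have e1 : ∑ u, (1 - w u) * ((1 - w u) * y u) = U :=
      Finset.sum_congr rfl fun u _ => by rw [← mul_assoc, hvv]
    have e2 : ∑ u, (1 - w u) ^ 2 = (δ : ℝ) + k := by
      rw [← hx]; exact Finset.sum_congr rfl fun u _ => by rw [sq, hvv]
    have e3 : ∑ u, ((1 - w u) * y u) ^ 2 = R :=
      Finset.sum_congr rfl fun u _ => by rw [mul_pow, sq (1 - w u), hvv]
    rw [e1, e2, e3] at this
    exact this
  have hR0 : 0 ≤ R := Finset.sum_nonneg fun u _ => mul_nonneg (hw1 u) (sq_nonneg _)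
  have hJ : 4 * e * a ^ 2 + 4 * a * ∑ u, g u * d u ≤ J2 / 2 := by
    have h1 : ∑ u, ∑ v, (4 * a ^ 2 * r u v + 4 * a * (r u v * d u) + 4 * a * (r u v * d v))
        ≤ J2 := by
      rw [hJd]
      refine Finset.sum_le_sum fun u _ => Finset.sum_le_sum fun v _ => ?_
      by_cases hin : F.Adj u v
      · obtain ⟨-, h2, h3⟩ := hmem u v ((hFadj u v).1 hin)
        simp only [r, d, w, hin, h2, h3, if_true]
        nlinarith [sq_nonneg ((y u - a) + (y v - a))]
      · simp [r, hin]
    have h2 : ∑ u, ∑ v, r u v * d v = ∑ u, ∑ v, r u v * d u := by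
      rw [Finset.sum_comm]
      exact Finset.sum_congr rfl fun u _ => Finset.sum_congr rfl fun v _ => by rw [hrsymm]
    have h3 : ∑ u, ∑ v, r u v * d u = ∑ u, g u * d u :=
      Finset.sum_congr rfl fun u _ => by rw [hgr, Finset.sum_mul]
    have h4 : ∑ u, ∑ v, r u v = 2 * e := by
      rw [← hgsum]; exact Finset.sum_congr rfl fun u _ => (hgr u).symm
    simp only [Finset.sum_add_distrib, ← Finset.mul_sum] at h1
    rw [h2, h3, h4] at h1
    linarith
  -- numerics
  have hdiv := Nat.div_add_mod (δ * (δ + k)) 4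
  have hmod := Nat.mod_lt (δ * (δ + k)) (by norm_num : 4 > 0)
  have he1n : δ * (δ + k) + 1 ≤ 4 * E'.card := by omega
  have he2n : 4 * E'.card ≤ δ * (δ + k) + 4 := by omega
  have he1 : (δ : ℝ) * (δ + k) + 1 ≤ 4 * e := by rw [he]; exact_mod_cast he1n
  have he2 : 4 * e ≤ (δ : ℝ) * (δ + k) + 4 := by rw [he]; exact_mod_cast he2n
  have hkr : (1 : ℝ) ≤ k := by exact_mod_cast hk
  have hδr : (2 : ℝ) ≤ δ := by exact_mod_cast hδ
  have hnr : ((δ : ℝ) ^ 2 + k * δ + 7 * δ + 6 * k + 9) * ((δ : ℝ) ^ 2 + k * δ + 1) ≤ n := by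
    exact_mod_cast hn
  obtain ⟨K, hK⟩ : ∃ K : ℝ, K = 2 * ((n : ℝ) - (δ + k) - 1) - δ - 1 := ⟨_, rfl⟩
  obtain ⟨p, hp⟩ : ∃ p : ℝ, p = ((δ : ℝ) + k) + ((δ : ℝ) + k) * δ / K := ⟨_, rfl⟩
  obtain ⟨hK0, hp0, hB, hA, hC⟩ := num_bound k δ n K p e (δ + k) _ hkr hδr hnr rfl rfl hK hp
    he1 he2
  rw [← hNr] at hK hA hC
  have hL2 : (∑ u, (4 * g u - 2 * p * z u) * d u) ^ 2 ≤
      (32 * e ^ 2 + 4 * p ^ 2 * δ) * ∑ u, d u ^ 2 := by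
    refine (Finset.sum_mul_sq_le_sq_mul_sq Finset.univ _ d).trans ?_
    refine mul_le_mul_of_nonneg_right ?_ (Finset.sum_nonneg fun u _ => sq_nonneg _)
    calc ∑ u, (4 * g u - 2 * p * z u) ^ 2 ≤ ∑ u, (16 * g u ^ 2 + 4 * p ^ 2 * z u) := by
          refine Finset.sum_le_sum fun u _ => ?_
          have h1 : 0 ≤ g u * (p * z u) := mul_nonneg (hg0 u) (mul_nonneg hp0.le (hz0 u))
          have h2 := hzz u
          have h3 : (4 * g u - 2 * p * z u) ^ 2 =
              16 * g u ^ 2 - 16 * (g u * (p * z u)) + 4 * p ^ 2 * (z u * z u) := by ring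
          rw [h3, h2]; linarith
      _ = 16 * ∑ u, g u ^ 2 + 4 * p ^ 2 * δ := by
          rw [Finset.sum_add_distrib, ← Finset.mul_sum, ← Finset.mul_sum, hz]
      _ ≤ _ := by linarith
  have hLe : ∑ u, (4 * g u - 2 * p * z u) * d u =
      4 * ∑ u, g u * d u - 2 * p * ∑ u, z u * d u := by
    rw [Finset.mul_sum, Finset.mul_sum, ← Finset.sum_sub_distrib]
    exact Finset.sum_congr rfl fun u _ => by ring
  have hfinal := scalar_core N (δ + k) δ e a (∑ u, d u ^ 2) _ (∑ u, g u * d u)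
    (∑ u, z u * d u) (∑ u, z u * d u ^ 2) R U S T (J2 / 2) P SW K p (by linarith) hN0 hK0 hK
    hp hp0 hB hA hC (Finset.sum_nonneg fun u _ => sq_nonneg _) hd2 hSWa hJ hTe hYd2 hS2 hU2
    hR0 hpos hLe hL2
  rw [hPR]
  have hNe : (n : ℝ) - δ - k - 1 = N - 1 := by rw [hNr]; ring
  rw [hNe]
  linarith

/-- **Lemma 3.7**: for `n` large, every graph in the family `𝓑₂(n,k,δ)` has Q-index less
than `2(n-δ-k-1)`. -/
theorem qIndex_lt_of_inB2 (k δ n : ℕ) (hk : 1 ≤ k) (hδ : 2 ≤ δ)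
    (hn : (δ ^ 2 + k * δ + 7 * δ + 6 * k + 9) * (δ ^ 2 + k * δ + 1) ≤ n)
    (G : SimpleGraph (Fin n)) [DecidableRel G.Adj] (hG : InB2 n k δ G) :
    qIndex G < 2 * ((n : ℝ) - δ - k - 1) := by
  obtain ⟨E', hE, hcard, ⟨φ⟩⟩ := hG
  have hnbig : δ + k + 2 ≤ n := by
    have h1 := Nat.le_mul_of_pos_right (δ ^ 2 + k * δ + 7 * δ + 6 * k + 9)
      (Nat.succ_pos (δ ^ 2 + k * δ))
    simp only [Nat.succ_eq_add_one] at h1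
    linarith [Nat.zero_le (δ ^ 2), Nat.zero_le (k * δ)]
  have hnr : (δ : ℝ) + k + 2 ≤ n := by exact_mod_cast hnbig
  refine qIndex_lt_of_quad G _ (by linarith) fun x hx => ?_
  have hy : x ∘ φ.symm ≠ 0 := by
    intro h
    apply hx
    funext i
    have := congrFun h (φ i)
    simpa using this
  have h := main_quad k δ n hk hδ hn E' hE hcard (x ∘ φ.symm) hy
  have h1 : ∑ u, (x ∘ φ.symm) u ^ 2 = ∑ u, x u ^ 2 :=
    Equiv.sum_comp φ.symm.toEquiv (fun u => x u ^ 2)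
  rw [h1] at h
  refine lt_of_eq_of_lt ?_ h
  have h2 : ∀ u v, ((Bgraph n k δ).deleteEdges ↑E').Adj (φ.toEquiv u) (φ.toEquiv v) ↔
      G.Adj u v := fun u v => φ.map_rel_iff
  have h3 : ∀ u, (x ∘ φ.symm) (φ.toEquiv u) = x u := fun u => by
    exact congrArg x (φ.symm_apply_apply u)
  symm
  rw [← Equiv.sum_comp φ.toEquiv]
  refine Finset.sum_congr rfl fun u _ => ?_
  rw [← Equiv.sum_comp φ.toEquiv]
  refine Finset.sum_congr rfl fun v _ => ?_
  by_cases hG : G.Adj u v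
  · rw [if_pos hG, if_pos ((h2 u v).2 hG), h3, h3]
  · rw [if_neg hG, if_neg (fun h => hG ((h2 u v).1 h))]
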